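/- Characterization of shares passing verification (precise content of Theorem 2): assume l is prime, (α, β) ≠ (0, 0), and Q ∈ M with Q ≠ 0. Then for all P, P' ∈ M, e(P', Q) = e(P, Q) if and only if there exists c : ZMod l with P' = P + c • Q. In particular, a submitted share P' passes the verification test against the published code V = e(P, Q) exactly when it differs from the true share P by a multiple of the public point Q. -/

import Mathlib

/-- The coordinate form of the self-pairing `e_{α,β}` on `E[l] ≅ Z_l ⊕ Z_l` with
generating pair `G = (1,0)`, `H = (0,1)` and `W = α • G + β • H = (α, β)`:
`e((r₁,s₁),(r₂,s₂)) = (r₁ * s₂ − r₂ * s₁) • W`. -/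
def selfPairing {l : ℕ} (α β : ZMod l) (A B : ZMod l × ZMod l) : ZMod l × ZMod l :=
  (A.1 * B.2 - B.1 * A.2) • ((α, β) : ZMod l × ZMod l)

/-!
By linearity in the first argument, it is enough to decide when `e(D, Q) = 0` for `D = P' - P`.
If `u * α + v * β = 1`, then `(α, β)` has trivial annihilator, so `e(D, Q) = 0` says that the
determinant of `D` and `Q` vanishes; if `u * Q.1 + v * Q.2 = 1`, this in turn gives
`D = (u * D.1 + v * D.2) • Q`. Over a field, two coordinates are coprime unless both are zero.
-/

section CommSemiring

variable {R : Type*} [CommSemiring R] {v w : R × R}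

theorem smul_eq_zero_iff_of_isCoprime (hw : IsCoprime w.1 w.2) {r : R} :
    r • w = 0 ↔ r = 0 := by
  refine ⟨fun h ↦ ?_, fun h ↦ by rw [h, zero_smul]⟩
  obtain ⟨a, b, hab⟩ := hw
  have h₁ : r * w.1 = 0 := congrArg Prod.fst h
  have h₂ : r * w.2 = 0 := congrArg Prod.snd h
  calc
    r = r * (a * w.1 + b * w.2) := by rw [hab, mul_one]
    _ = a * (r * w.1) + b * (r * w.2) := by ring
    _ = 0 := by rw [h₁, h₂, mul_zero, mul_zero, add_zero]

theorem fst_mul_snd_eq_iff_exists_eq_smul (hw : IsCoprime w.1 w.2) :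
    v.1 * w.2 = w.1 * v.2 ↔ ∃ c : R, v = c • w := by
  constructor
  · intro h
    obtain ⟨a, b, hab⟩ := hw
    refine ⟨a * v.1 + b * v.2, Prod.ext ?_ ?_⟩
    · calc
        v.1 = v.1 * (a * w.1 + b * w.2) := by rw [hab, mul_one]
        _ = a * v.1 * w.1 + b * (v.1 * w.2) := by ring
        _ = a * v.1 * w.1 + b * (w.1 * v.2) := by rw [h]
        _ = (a * v.1 + b * v.2) * w.1 := by ring
    · calc
        v.2 = v.2 * (a * w.1 + b * w.2) := by rw [hab, mul_one]
        _ = a * (w.1 * v.2) + b * v.2 * w.2 := by ring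
        _ = a * (v.1 * w.2) + b * v.2 * w.2 := by rw [h]
        _ = (a * v.1 + b * v.2) * w.2 := by ring
  · rintro ⟨c, rfl⟩
    simp only [Prod.smul_fst, Prod.smul_snd, smul_eq_mul]
    ring

end CommSemiring

theorem isCoprime_fst_snd_iff_ne_zero {K : Type*} [Semifield K] {w : K × K} :
    IsCoprime w.1 w.2 ↔ w ≠ 0 := by
  simp only [Semifield.isCoprime_iff, ne_eq, Prod.ext_iff, not_and_or, Prod.fst_zero, Prod.snd_zero]

section SelfPairing

variable {l : ℕ} {α β : ZMod l}

theorem selfPairing_sub_left (A A' B : ZMod l × ZMod l) :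
    selfPairing α β (A - A') B = selfPairing α β A B - selfPairing α β A' B := by
  simp only [selfPairing, Prod.fst_sub, Prod.snd_sub, ← sub_smul]
  congr 1
  ring

theorem selfPairing_eq_zero_iff (hW : IsCoprime α β) {A B : ZMod l × ZMod l} :
    selfPairing α β A B = 0 ↔ A.1 * B.2 = B.1 * A.2 := by
  rw [selfPairing, smul_eq_zero_iff_of_isCoprime hW, sub_eq_zero]

theorem selfPairing_verification_iff_general (hW : IsCoprime α β) {Q : ZMod l × ZMod l}
    (hQ : IsCoprime Q.1 Q.2) (P P' : ZMod l × ZMod l) :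
    selfPairing α β P' Q = selfPairing α β P Q ↔ ∃ c : ZMod l, P' = P + c • Q := by
  rw [← sub_eq_zero, ← selfPairing_sub_left, selfPairing_eq_zero_iff hW,
    fst_mul_snd_eq_iff_exists_eq_smul hQ]
  simp only [sub_eq_iff_eq_add']

end SelfPairing

/-- Theorem 2 (precise content): for `l` prime, `(α, β) ≠ (0,0)` and `Q ≠ 0`,
a submitted share `P'` passes verification against the code `V = e(P, Q)`, i.e.
`e(P', Q) = e(P, Q)`, iff `P'` differs from `P` by a multiple of `Q`. -/
theorem selfPairing_verification_iff {l : ℕ} (hl : Nat.Prime l) (α β : ZMod l)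
    (hαβ : (α, β) ≠ ((0, 0) : ZMod l × ZMod l))
    (Q : ZMod l × ZMod l) (hQ : Q ≠ 0) (P P' : ZMod l × ZMod l) :
    selfPairing α β P' Q = selfPairing α β P Q ↔ ∃ c : ZMod l, P' = P + c • Q := by
  have : Fact l.Prime := ⟨hl⟩
  exact selfPairing_verification_iff_general (isCoprime_fst_snd_iff_ne_zero.mpr hαβ)
    (isCoprime_fst_snd_iff_ne_zero.mpr hQ) P P'
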